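/- There exists an absolute constant C > 0 such that for every δ ∈ [0, 1/2], every ε ∈ (0, 1], every A > 0, every n ∈ ℕ and every f : {0,1}^n → {0,1} satisfying E_x[s_f(x)^{1/2+δ}] ≤ A, one has Stab_{1−ε}(f) ≥ E[f²] − C·A·ε^{1/2+δ}; equivalently, Pr_{(x,y) (1−ε)-correlated}[f(x) ≠ f(y)] ≤ C·A·ε^{1/2+δ}. -/

import Mathlib

open Finset

noncomputable section

/-- Expectation over the uniform distribution on `{0,1}^n`. -/
def hcExp (n : ℕ) (g : (Fin n → Bool) → ℝ) : ℝ :=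
  (∑ x : Fin n → Bool, g x) / 2 ^ n

/-- Flip the `i`-th coordinate of `x`. -/
def hcFlip {n : ℕ} (x : Fin n → Bool) (i : Fin n) : Fin n → Bool :=
  Function.update x i (!(x i))

/-- Sensitivity of `f` at `x`. -/
def sens {n : ℕ} (f : (Fin n → Bool) → Bool) (x : Fin n → Bool) : ℕ :=
  (Finset.univ.filter fun i => f (hcFlip x i) ≠ f x).card

/-- `f` with values in `{0,1} ⊆ ℝ`. -/
def toReal {n : ℕ} (f : (Fin n → Bool) → Bool) : (Fin n → Bool) → ℝ :=
  fun x => if f x then 1 else 0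

/-- Variance of a Boolean function. -/
def hcVar (n : ℕ) (f : (Fin n → Bool) → Bool) : ℝ :=
  hcExp n (toReal f) - (hcExp n (toReal f)) ^ 2

/-- Influence of coordinate `i`. -/
def influence (n : ℕ) (f : (Fin n → Bool) → Bool) (i : Fin n) : ℝ :=
  hcExp n (fun x => if f (hcFlip x i) = f x then 0 else 1)

/-- Fourier character. -/
def chi {n : ℕ} (S : Finset (Fin n)) (x : Fin n → Bool) : ℝ :=
  ∏ i ∈ S, (if x i then (-1 : ℝ) else 1)

/-- Fourier coefficient of `g` at `S`. -/
def fcoef (n : ℕ) (g : (Fin n → Bool) → ℝ) (S : Finset (Fin n)) : ℝ :=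
  hcExp n (fun x => g x * chi S x)

/-- Derivative of `g` along coordinate `i`. -/
def derivOn {n : ℕ} (g : (Fin n → Bool) → ℝ) (i : Fin n) (x : Fin n → Bool) : ℝ :=
  g (Function.update x i false) - g (Function.update x i true)

/-- Euclidean norm of the gradient of `g` at `x`. -/
def gradNorm2 {n : ℕ} (g : (Fin n → Bool) → ℝ) (x : Fin n → Bool) : ℝ :=
  Real.sqrt (∑ i, (derivOn g i x) ^ 2)

/-- `ℓ_p` norm of the gradient of `g` at `x`. -/
def gradNormP {n : ℕ} (p : ℝ) (g : (Fin n → Bool) → ℝ) (x : Fin n → Bool) : ℝ :=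
  (∑ i, |derivOn g i x| ^ p) ^ (1 / p)

/-- Fourier weight at exactly level `d`. -/
def wEq (n : ℕ) (g : (Fin n → Bool) → ℝ) (d : ℕ) : ℝ :=
  ∑ S ∈ Finset.univ.filter (fun S : Finset (Fin n) => S.card = d), (fcoef n g S) ^ 2

/-- Approximate level-`d` Fourier weight: levels in `[d, 2d)`. -/
def wApprox (n : ℕ) (g : (Fin n → Bool) → ℝ) (d : ℕ) : ℝ :=
  ∑ S ∈ Finset.univ.filter (fun S : Finset (Fin n) => d ≤ S.card ∧ S.card < 2 * d),
    (fcoef n g S) ^ 2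

/-- Fourier weight at levels `≥ d`. -/
def wGe (n : ℕ) (g : (Fin n → Bool) → ℝ) (d : ℕ) : ℝ :=
  ∑ S ∈ Finset.univ.filter (fun S : Finset (Fin n) => d ≤ S.card), (fcoef n g S) ^ 2


/-- The noise operator `T_ρ`: `y i = x i` with probability `ρ`, and uniform otherwise,
so `y i = x i` with total probability `(1 + ρ)/2`. -/
def noiseOp (n : ℕ) (ρ : ℝ) (g : (Fin n → Bool) → ℝ) (x : Fin n → Bool) : ℝ :=
  ∑ y : Fin n → Bool,
    (∏ i, if y i = x i then (1 + ρ) / 2 else (1 - ρ) / 2) * g y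

/-- Noise stability of `f` at correlation `ρ`. -/
def stab (n : ℕ) (ρ : ℝ) (f : (Fin n → Bool) → Bool) : ℝ :=
  hcExp n (fun x => toReal f x * noiseOp n ρ (toReal f) x)

/-- Probability that `f(x) ≠ f(y)` for a `ρ`-correlated pair `(x, y)`. -/
def corrDisagree (n : ℕ) (ρ : ℝ) (f : (Fin n → Bool) → Bool) : ℝ :=
  hcExp n (fun x => ∑ y : Fin n → Bool,
    (∏ i, if y i = x i then (1 + ρ) / 2 else (1 - ρ) / 2) *
      (if f x = f y then 0 else 1))

/-!
On `0 ≤ ρ < 1` the noise kernel is a product measure, and differentiating it in `ρ` multiplies it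
by `∑ i, score i`, where the scores are independent, centred, of variance `1 / (1 - ρ ^ 2)` and of
mean absolute value `1`. Since the `i`-th term changes sign under flipping `x i`, the derivative of
the stability is half the mean of `∑ i, (f x - f (x ⊕ e_i)) * E_y[score i * f y]`. This sum is at
most `s_f(x)` by the triangle inequality, and its square is at most `s_f(x) / (1 - ρ)` by
Cauchy–Schwarz and orthogonality of the scores. Interpolating gives the bound
`s_f(x) ^ p * (1 - ρ) ^ (p - 1)` for `1 / 2 ≤ p ≤ 1`, to be integrated over `[1 - ε, 1]`.
-/

section ProductWeights

variable {ι R : Type*} [Fintype ι] [DecidableEq ι] [CommSemiring R]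
  {κ : ι → Type*} {w : ∀ i, κ i → R}

lemma prod_update_mul_apply (w : ∀ i, κ i → R) (i : ι) (g : κ i → R) (y : ∀ i, κ i) :
    ∏ k, Function.update w i (fun b => w i b * g b) k (y k) = (∏ k, w k (y k)) * g (y i) := by
  have hupdate (k : ι) := Function.apply_update (fun k (v : κ k → R) => v (y k)) w i
    (fun b => w i b * g b) k
  simp only [hupdate, prod_update_of_mem (mem_univ i)]
  rw [← prod_erase_mul univ _ (mem_univ i), sdiff_singleton_eq_erase]
  ring

variable [∀ i, Fintype (κ i)]

lemma sum_prod_mul_apply (w : ∀ i, κ i → R) (i : ι) (g : κ i → R) :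
    ∑ y : ∀ i, κ i, (∏ k, w k (y k)) * g (y i)
      = (∑ b, w i b * g b) * ∏ k ∈ univ.erase i, ∑ b, w k b := by
  simp only [← prod_update_mul_apply, ← Fintype.prod_sum]
  rw [← mul_prod_erase univ _ (mem_univ i), Function.update_self]
  congr 1
  refine prod_congr rfl fun k hk => ?_
  rw [Function.update_of_ne (ne_of_mem_erase hk)]

lemma sum_prod_eq_one (hw : ∀ i, ∑ b, w i b = 1) : ∑ y : ∀ i, κ i, ∏ k, w k (y k) = 1 := by
  rw [← Fintype.prod_sum, prod_eq_one fun i _ => hw i]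

lemma sum_prod_mul_apply_of_sum_eq_one (hw : ∀ i, ∑ b, w i b = 1) (i : ι) (g : κ i → R) :
    ∑ y : ∀ i, κ i, (∏ k, w k (y k)) * g (y i) = ∑ b, w i b * g b := by
  rw [sum_prod_mul_apply, prod_eq_one fun k _ => hw k, mul_one]

lemma sum_prod_mul_apply_mul_apply_eq_zero {i j : ι} (hij : i ≠ j) {g : κ i → R}
    (hg : ∑ b, w i b * g b = 0) (h : κ j → R) :
    ∑ y : ∀ i, κ i, (∏ k, w k (y k)) * (g (y i) * h (y j)) = 0 := by
  simp only [← mul_assoc, ← prod_update_mul_apply w i g]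
  rw [sum_prod_mul_apply, prod_eq_zero (mem_erase.mpr ⟨hij, mem_univ i⟩), mul_zero]
  rwa [Function.update_self]

lemma sum_prod_mul_sum_apply_sq (hw : ∀ i, ∑ b, w i b = 1) {u : ∀ i, κ i → R}
    (hu : ∀ i, ∑ b, w i b * u i b = 0) :
    ∑ y : ∀ i, κ i, (∏ k, w k (y k)) * (∑ i, u i (y i)) ^ 2 = ∑ i, ∑ b, w i b * u i b ^ 2 := by
  calc ∑ y : ∀ i, κ i, (∏ k, w k (y k)) * (∑ i, u i (y i)) ^ 2
      = ∑ i, ∑ j, ∑ y : ∀ i, κ i, (∏ k, w k (y k)) * (u i (y i) * u j (y j)) := by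
        simp only [sq, sum_mul_sum]
        simp only [mul_sum]
        rw [sum_comm]
        exact sum_congr rfl fun i _ => sum_comm
    _ = ∑ i, ∑ y : ∀ i, κ i, (∏ k, w k (y k)) * u i (y i) ^ 2 := by
        refine sum_congr rfl fun i _ => ?_
        rw [Fintype.sum_eq_single i fun j hj =>
          sum_prod_mul_apply_mul_apply_eq_zero hj.symm (hu i) (u j)]
        simp only [sq]
    _ = ∑ i, ∑ b, w i b * u i b ^ 2 :=
        sum_congr rfl fun i _ => sum_prod_mul_apply_of_sum_eq_one hw i fun b => u i b ^ 2

end ProductWeights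

section RealInequalities

lemma le_rpow_of_le_of_sq_le {x t p : ℝ} (hx : x ≤ t) (hx2 : x ^ 2 ≤ t) (hp : 1 / 2 ≤ p)
    (hp1 : p ≤ 1) : x ≤ t ^ p := by
  have ht : 0 ≤ t := (sq_nonneg x).trans hx2
  rcases ht.eq_or_lt with rfl | htpos
  · exact hx.trans (Real.rpow_nonneg le_rfl p)
  rcases le_total t 1 with ht1 | ht1
  · exact hx.trans (by simpa using Real.rpow_le_rpow_of_exponent_ge htpos ht1 hp1)
  · calc x ≤ √t := Real.le_sqrt_of_sq_le hx2
      _ = t ^ (1 / 2 : ℝ) := Real.sqrt_eq_rpow t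
      _ ≤ t ^ p := Real.rpow_le_rpow_of_exponent_le ht1 hp

lemma le_rpow_mul_rpow_sub_one {x s u p : ℝ} (hs : 0 ≤ s) (hu : 0 < u) (hx : x ≤ s)
    (hx2 : x ^ 2 ≤ s / u) (hp : 1 / 2 ≤ p) (hp1 : p ≤ 1) : x ≤ s ^ p * u ^ (p - 1) := by
  rw [Real.rpow_sub_one hu.ne', ← mul_div_assoc, ← Real.mul_rpow hs hu.le, le_div_iff₀ hu]
  refine le_rpow_of_le_of_sq_le (by gcongr) ?_ hp hp1
  calc (x * u) ^ 2 = x ^ 2 * u * u := by ring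
    _ ≤ s * u := by gcongr; exact (le_div_iff₀ hu).mp hx2

lemma sub_le_of_deriv_le_rpow {φ φ' : ℝ → ℝ} {a b p M : ℝ} (hab : a ≤ b) (hp : 0 < p)
    (hφ : ContinuousOn φ (Set.Icc a b)) (hφ' : ∀ r ∈ Set.Ioo a b, HasDerivAt φ (φ' r) r)
    (hle : ∀ r ∈ Set.Ioo a b, φ' r ≤ M * (b - r) ^ (p - 1)) :
    φ b - φ a ≤ M / p * (b - a) ^ p := by
  have hderiv : ∀ r ∈ Set.Ioo a b, HasDerivAt (fun r => φ r + M / p * (b - r) ^ p)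
      (φ' r + M / p * (-1 * p * (b - r) ^ (p - 1))) r := fun r hr =>
    (hφ' r hr).add <| (((hasDerivAt_id r).const_sub b).rpow_const
      (Or.inl (sub_pos.mpr hr.2).ne')).const_mul _
  have hcont : ContinuousOn (fun r => φ r + M / p * (b - r) ^ p) (Set.Icc a b) :=
    hφ.add <| continuousOn_const.mul <|
      (continuousOn_const.sub continuousOn_id).rpow_const fun _ _ => Or.inr hp.le
  have hanti : AntitoneOn (fun r => φ r + M / p * (b - r) ^ p) (Set.Icc a b) := by
    refine antitoneOn_of_hasDerivWithinAt_nonpos (convex_Icc a b) hcont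
      (fun r hr => (hderiv r (interior_Icc.subset hr)).hasDerivWithinAt) fun r hr => ?_
    have hcancel : M / p * (-1 * p * (b - r) ^ (p - 1)) = -(M * (b - r) ^ (p - 1)) := by
      field_simp
    rw [hcancel]
    linarith [hle r (interior_Icc.subset hr)]
  have hends := hanti (Set.left_mem_Icc.mpr hab) (Set.right_mem_Icc.mpr hab) hab
  simp only [sub_self, Real.zero_rpow hp.ne', mul_zero, add_zero] at hends
  linarith

end RealInequalities

section BitKernel

variable {ρ : ℝ}

/-- Transition probabilities of a single `ρ`-correlated bit. -/
def bitKernel (ρ : ℝ) (a b : Bool) : ℝ := if b = a then (1 + ρ) / 2 else (1 - ρ) / 2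

/-- Score of a single `ρ`-correlated bit: the logarithmic derivative in `ρ` of `bitKernel ρ a b`,
meaningful for `-1 < ρ < 1`. -/
def bitScore (ρ : ℝ) (a b : Bool) : ℝ := if b = a then 1 / (1 + ρ) else -1 / (1 - ρ)

lemma bitKernel_comm (ρ : ℝ) (a b : Bool) : bitKernel ρ a b = bitKernel ρ b a := by
  simp only [bitKernel, eq_comm]

lemma bitKernel_nonneg (hρ : ρ ∈ Set.Icc (-1) 1) (a b : Bool) : 0 ≤ bitKernel ρ a b := by
  unfold bitKernel
  split_ifs <;> linarith [hρ.1, hρ.2]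

lemma sum_bitKernel (ρ : ℝ) (a : Bool) : ∑ b, bitKernel ρ a b = 1 := by
  cases a <;> simp only [Fintype.sum_bool, bitKernel, reduceCtorEq, if_true, if_false] <;> ring

lemma continuous_bitKernel (a b : Bool) : Continuous fun r => bitKernel r a b := by
  unfold bitKernel
  split_ifs <;> fun_prop

lemma bitKernel_mul_bitScore (hρ : ρ ∈ Set.Ioo (-1) 1) (a b : Bool) :
    bitKernel ρ a b * bitScore ρ a b = if b = a then 1 / 2 else -1 / 2 := by
  have hadd : 1 + ρ ≠ 0 := by linarith [hρ.1]
  have hsub : 1 - ρ ≠ 0 := by linarith [hρ.2]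
  unfold bitKernel bitScore
  split_ifs <;> field_simp

lemma hasDerivAt_bitKernel (hρ : ρ ∈ Set.Ioo (-1) 1) (a b : Bool) :
    HasDerivAt (fun r => bitKernel r a b) (bitKernel ρ a b * bitScore ρ a b) ρ := by
  rw [bitKernel_mul_bitScore hρ]
  unfold bitKernel
  split_ifs
  · exact ((hasDerivAt_id ρ).const_add 1).div_const 2
  · exact ((hasDerivAt_id ρ).const_sub 1).div_const 2

lemma bitKernel_mul_bitScore_not (hρ : ρ ∈ Set.Ioo (-1) 1) (a b : Bool) :
    bitKernel ρ (!a) b * bitScore ρ (!a) b = -(bitKernel ρ a b * bitScore ρ a b) := by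
  rw [bitKernel_mul_bitScore hρ, bitKernel_mul_bitScore hρ]
  cases a <;> cases b <;> norm_num

lemma sum_bitKernel_mul_bitScore (hρ : ρ ∈ Set.Ioo (-1) 1) (a : Bool) :
    ∑ b, bitKernel ρ a b * bitScore ρ a b = 0 := by
  simp only [bitKernel_mul_bitScore hρ]
  cases a <;> norm_num

lemma sum_bitKernel_mul_abs_bitScore (hρ : ρ ∈ Set.Ioo (-1) 1) (a : Bool) :
    ∑ b, bitKernel ρ a b * |bitScore ρ a b| = 1 := by
  have habs (b : Bool) : bitKernel ρ a b * |bitScore ρ a b| = 1 / 2 := by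
    rw [← abs_of_nonneg (bitKernel_nonneg (Set.Ioo_subset_Icc_self hρ) a b), ← abs_mul,
      bitKernel_mul_bitScore hρ]
    split_ifs <;> norm_num
  simp only [habs, Fintype.sum_bool, add_halves]

lemma sum_bitKernel_mul_bitScore_sq (hρ : ρ ∈ Set.Ioo (-1) 1) (a : Bool) :
    ∑ b, bitKernel ρ a b * bitScore ρ a b ^ 2 = 1 / (1 - ρ ^ 2) := by
  have hadd : 1 + ρ ≠ 0 := by linarith [hρ.1]
  have hsub : 1 - ρ ≠ 0 := by linarith [hρ.2]
  have hfactor : 1 - ρ ^ 2 = (1 + ρ) * (1 - ρ) := by ring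
  simp only [sq (bitScore _ _ _), ← mul_assoc, bitKernel_mul_bitScore hρ]
  rw [hfactor]
  cases a <;>
    simp only [Fintype.sum_bool, bitScore, reduceCtorEq, if_true, if_false] <;> field_simp <;> ring

end BitKernel

section NoiseOperator

variable {n : ℕ} {ρ : ℝ}

/-- Transition probabilities of the noise operator `T_ρ` on the cube. -/
def noiseKernel (ρ : ℝ) (x y : Fin n → Bool) : ℝ := ∏ i, bitKernel ρ (x i) (y i)

/-- The derivative of `T_ρ F` at `x` in the correlation parameter of the `i`-th coordinate alone,
encoded as the correlation of `F` with the `i`-th score, which is legitimate for `-1 < ρ < 1`. -/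
def noiseDeriv (ρ : ℝ) (F : (Fin n → Bool) → ℝ) (i : Fin n) (x : Fin n → Bool) : ℝ :=
  ∑ y, noiseKernel ρ x y * (bitScore ρ (x i) (y i) * F y)

lemma noiseOp_eq_sum_noiseKernel (ρ : ℝ) (F : (Fin n → Bool) → ℝ) (x : Fin n → Bool) :
    noiseOp n ρ F x = ∑ y, noiseKernel ρ x y * F y := rfl

lemma noiseKernel_comm (ρ : ℝ) (x y : Fin n → Bool) : noiseKernel ρ x y = noiseKernel ρ y x :=
  prod_congr rfl fun _ _ => bitKernel_comm ρ _ _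

lemma noiseKernel_nonneg (hρ : ρ ∈ Set.Icc (-1) 1) (x y : Fin n → Bool) :
    0 ≤ noiseKernel ρ x y :=
  prod_nonneg fun _ _ => bitKernel_nonneg hρ _ _

lemma sum_noiseKernel (ρ : ℝ) (x : Fin n → Bool) : ∑ y, noiseKernel ρ x y = 1 :=
  sum_prod_eq_one fun i => sum_bitKernel ρ (x i)

lemma continuous_noiseOp (F : (Fin n → Bool) → ℝ) (x : Fin n → Bool) :
    Continuous fun r => noiseOp n r F x :=
  continuous_finsetSum _ fun y _ =>
    (continuous_finsetProd _ fun i _ => continuous_bitKernel (x i) (y i)).mul_const (F y)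

lemma noiseOp_le_of_le (hρ : ρ ∈ Set.Icc (-1) 1) {F : (Fin n → Bool) → ℝ} {B : ℝ}
    (hF : ∀ y, F y ≤ B) (x : Fin n → Bool) : noiseOp n ρ F x ≤ B :=
  calc noiseOp n ρ F x ≤ ∑ y, noiseKernel ρ x y * B :=
        sum_le_sum fun y _ => mul_le_mul_of_nonneg_left (hF y) (noiseKernel_nonneg hρ x y)
    _ = B := by rw [← sum_mul, sum_noiseKernel, one_mul]

lemma noiseOp_one (F : (Fin n → Bool) → ℝ) (x : Fin n → Bool) : noiseOp n 1 F x = F x := by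
  rw [noiseOp_eq_sum_noiseKernel, Fintype.sum_eq_single x]
  · simp [noiseKernel, bitKernel]
  · intro y hy
    obtain ⟨i, hi⟩ := Function.ne_iff.mp hy
    rw [noiseKernel, prod_eq_zero (mem_univ i), zero_mul]
    simp [bitKernel, hi]

lemma hasDerivAt_noiseKernel (hρ : ρ ∈ Set.Ioo (-1) 1) (x y : Fin n → Bool) :
    HasDerivAt (fun r => noiseKernel r x y)
      (noiseKernel ρ x y * ∑ i, bitScore ρ (x i) (y i)) ρ := by
  refine (HasDerivAt.fun_finsetProd fun i _ =>
    hasDerivAt_bitKernel hρ (x i) (y i)).congr_deriv ?_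
  rw [mul_sum]
  refine sum_congr rfl fun i _ => ?_
  rw [smul_eq_mul, ← mul_assoc, prod_erase_mul univ _ (mem_univ i), noiseKernel]

lemma hasDerivAt_noiseOp (hρ : ρ ∈ Set.Ioo (-1) 1) (F : (Fin n → Bool) → ℝ) (x : Fin n → Bool) :
    HasDerivAt (fun r => noiseOp n r F x) (∑ i, noiseDeriv ρ F i x) ρ := by
  refine (HasDerivAt.fun_sum fun y _ =>
    (hasDerivAt_noiseKernel hρ x y).mul_const (F y)).congr_deriv ?_
  simp only [noiseDeriv, mul_sum, sum_mul, mul_assoc]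
  exact sum_comm

lemma noiseDeriv_hcFlip (hρ : ρ ∈ Set.Ioo (-1) 1) (F : (Fin n → Bool) → ℝ) (i : Fin n)
    (x : Fin n → Bool) : noiseDeriv ρ F i (hcFlip x i) = -noiseDeriv ρ F i x := by
  have hsplit (z y : Fin n → Bool) : noiseKernel ρ z y * (bitScore ρ (z i) (y i) * F y)
      = (∏ j ∈ univ.erase i, bitKernel ρ (z j) (y j))
        * (bitKernel ρ (z i) (y i) * bitScore ρ (z i) (y i)) * F y := by
    rw [noiseKernel, ← prod_erase_mul univ _ (mem_univ i)]
    ring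
  have hoff (y : Fin n → Bool) : ∏ j ∈ univ.erase i, bitKernel ρ (hcFlip x i j) (y j)
      = ∏ j ∈ univ.erase i, bitKernel ρ (x j) (y j) := by
    refine prod_congr rfl fun j hj => ?_
    rw [hcFlip, Function.update_of_ne (ne_of_mem_erase hj)]
  have hon : hcFlip x i i = !(x i) := Function.update_self ..
  rw [noiseDeriv, noiseDeriv, ← sum_neg_distrib]
  refine sum_congr rfl fun y _ => ?_
  rw [hsplit, hsplit, hoff, hon, bitKernel_mul_bitScore_not hρ]
  ring

lemma abs_noiseDeriv_le (hρ : ρ ∈ Set.Ioo (-1) 1) {F : (Fin n → Bool) → ℝ} {B : ℝ}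
    (hF : ∀ y, |F y| ≤ B) (i : Fin n) (x : Fin n → Bool) : |noiseDeriv ρ F i x| ≤ B :=
  calc |noiseDeriv ρ F i x|
      ≤ ∑ y, |noiseKernel ρ x y * (bitScore ρ (x i) (y i) * F y)| := abs_sum_le_sum_abs _ _
    _ ≤ ∑ y, noiseKernel ρ x y * |bitScore ρ (x i) (y i)| * B := by
        refine sum_le_sum fun y _ => ?_
        have hK := noiseKernel_nonneg (Set.Ioo_subset_Icc_self hρ) x y
        rw [abs_mul, abs_mul, abs_of_nonneg hK, ← mul_assoc]
        gcongr
        exact hF y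
    _ = B := by
        simp only [noiseKernel]
        rw [← sum_mul, sum_prod_mul_apply_of_sum_eq_one (fun k => sum_bitKernel ρ (x k)) i
          (fun b => |bitScore ρ (x i) b|), sum_bitKernel_mul_abs_bitScore hρ, one_mul]

lemma abs_sum_mul_noiseDeriv_le (hρ : ρ ∈ Set.Ioo (-1) 1) {F : (Fin n → Bool) → ℝ} {B : ℝ}
    (hF : ∀ y, |F y| ≤ B) (c : Fin n → ℝ) (x : Fin n → Bool) :
    |∑ i, c i * noiseDeriv ρ F i x| ≤ (∑ i, |c i|) * B := by
  rw [sum_mul]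
  refine (abs_sum_le_sum_abs _ _).trans (sum_le_sum fun i _ => ?_)
  rw [abs_mul]
  exact mul_le_mul_of_nonneg_left (abs_noiseDeriv_le hρ hF i x) (abs_nonneg _)

lemma sum_noiseKernel_mul_sum_bitScore_sq (hρ : ρ ∈ Set.Ioo (-1) 1) (c : Fin n → ℝ)
    (x : Fin n → Bool) :
    ∑ y, noiseKernel ρ x y * (∑ i, c i * bitScore ρ (x i) (y i)) ^ 2
      = (∑ i, c i ^ 2) / (1 - ρ ^ 2) := by
  have hcentred (i : Fin n) : ∑ b, bitKernel ρ (x i) b * (c i * bitScore ρ (x i) b) = 0 := by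
    simp only [mul_left_comm _ (c i), ← mul_sum, sum_bitKernel_mul_bitScore hρ, mul_zero]
  simp only [noiseKernel]
  rw [sum_prod_mul_sum_apply_sq (u := fun i b => c i * bitScore ρ (x i) b)
    (fun i => sum_bitKernel ρ (x i)) hcentred]
  simp only [mul_pow, mul_left_comm _ (c _ ^ 2), ← mul_sum, sum_bitKernel_mul_bitScore_sq hρ,
    mul_one_div, sum_div]

lemma sum_mul_noiseDeriv_sq_le (hρ : ρ ∈ Set.Ioo (-1) 1) (F : (Fin n → Bool) → ℝ)
    (c : Fin n → ℝ) (x : Fin n → Bool) :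
    (∑ i, c i * noiseDeriv ρ F i x) ^ 2
      ≤ (∑ i, c i ^ 2) / (1 - ρ ^ 2) * noiseOp n ρ (fun y => F y ^ 2) x := by
  have hK := noiseKernel_nonneg (Set.Ioo_subset_Icc_self hρ) x
  have hsum : ∑ i, c i * noiseDeriv ρ F i x
      = ∑ y, noiseKernel ρ x y * (∑ i, c i * bitScore ρ (x i) (y i)) * F y := by
    simp only [noiseDeriv, mul_sum, sum_mul]
    rw [sum_comm]
    exact sum_congr rfl fun y _ => sum_congr rfl fun i _ => by ring
  rw [hsum, ← sum_noiseKernel_mul_sum_bitScore_sq hρ, noiseOp_eq_sum_noiseKernel]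
  exact sum_sq_le_sum_mul_sum_of_sq_le_mul _ (fun y _ => mul_nonneg (hK y) (sq_nonneg _))
    (fun y _ => mul_nonneg (hK y) (sq_nonneg _)) fun y _ => le_of_eq (by ring)

end NoiseOperator

section CubeExpectation

variable {n : ℕ}

lemma hcExp_mono {g h : (Fin n → Bool) → ℝ} (hgh : ∀ x, g x ≤ h x) : hcExp n g ≤ hcExp n h :=
  div_le_div_of_nonneg_right (sum_le_sum fun x _ => hgh x) (by positivity)

lemma hcExp_mul_const (g : (Fin n → Bool) → ℝ) (c : ℝ) :
    hcExp n (fun x => g x * c) = hcExp n g * c := by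
  rw [hcExp, hcExp, ← sum_mul, div_mul_eq_mul_div]

lemma hasDerivAt_hcExp {g : ℝ → (Fin n → Bool) → ℝ} {g' : (Fin n → Bool) → ℝ} {r : ℝ}
    (hg : ∀ x, HasDerivAt (fun r => g r x) (g' x) r) :
    HasDerivAt (fun r => hcExp n (g r)) (hcExp n g') r :=
  (HasDerivAt.fun_sum fun x _ => hg x).div_const _

lemma hcExp_noiseOp (ρ : ℝ) (F : (Fin n → Bool) → ℝ) : hcExp n (noiseOp n ρ F) = hcExp n F := by
  simp only [hcExp, noiseOp_eq_sum_noiseKernel]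
  rw [sum_comm]
  simp only [← sum_mul, noiseKernel_comm ρ _, sum_noiseKernel, one_mul]

lemma hcFlip_involutive (i : Fin n) : Function.Involutive fun x : Fin n → Bool => hcFlip x i := by
  intro x
  simp [hcFlip]

lemma sum_comp_hcFlip (i : Fin n) (g : (Fin n → Bool) → ℝ) :
    ∑ x, g (hcFlip x i) = ∑ x, g x :=
  Equiv.sum_comp (hcFlip_involutive i).toPerm g

lemma hcExp_mul_sum_of_hcFlip_eq_neg {h : Fin n → (Fin n → Bool) → ℝ}
    (hh : ∀ i x, h i (hcFlip x i) = -h i x) (G : (Fin n → Bool) → ℝ) :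
    hcExp n (fun x => G x * ∑ i, h i x)
      = hcExp n (fun x => ∑ i, (G x - G (hcFlip x i)) * h i x) / 2 := by
  have hflip (i : Fin n) : ∑ x, G (hcFlip x i) * h i x = -∑ x, G x * h i x := by
    rw [← sum_comp_hcFlip i fun x => G x * h i x]
    simp only [hh, mul_neg, sum_neg_distrib, neg_neg]
  have hdouble : ∑ x, ∑ i, (G x - G (hcFlip x i)) * h i x = 2 * ∑ x, G x * ∑ i, h i x := by
    simp only [mul_sum _ _ (G _)]
    rw [sum_comm, sum_comm (f := fun x i => G x * h i x), mul_sum]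
    refine sum_congr rfl fun i _ => ?_
    simp only [sub_mul, sum_sub_distrib, hflip]
    ring
  rw [hcExp, hcExp, hdouble]
  ring

end CubeExpectation

section BooleanFunctions

variable {n : ℕ} {ρ p : ℝ} (f : (Fin n → Bool) → Bool)

lemma toReal_sub_sq (x y : Fin n → Bool) :
    (toReal f x - toReal f y) ^ 2 = if f x = f y then 0 else 1 := by
  unfold toReal
  cases f x <;> cases f y <;> norm_num

lemma abs_toReal_sub (x y : Fin n → Bool) :
    |toReal f x - toReal f y| = if f x = f y then 0 else 1 := by
  unfold toReal
  cases f x <;> cases f y <;> norm_num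

lemma abs_toReal_le_one (x : Fin n → Bool) : |toReal f x| ≤ 1 := by
  unfold toReal
  split_ifs <;> norm_num

lemma sum_ite_hcFlip_eq_sens (x : Fin n → Bool) :
    ∑ i, (if f x = f (hcFlip x i) then (0 : ℝ) else 1) = sens f x := by
  simp only [sens, ← sum_boole, eq_comm (a := f x), ite_not, ne_eq]

lemma stab_one : stab n 1 f = hcExp n fun x => toReal f x ^ 2 := by
  simp only [stab, noiseOp_one, sq]

lemma corrDisagree_eq_two_mul_sub_stab (ρ : ℝ) :
    corrDisagree n ρ f = 2 * (hcExp n (fun x => toReal f x ^ 2) - stab n ρ f) := by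
  have hpointwise (x : Fin n → Bool) :
      ∑ y, noiseKernel ρ x y * (toReal f x - toReal f y) ^ 2
        = toReal f x ^ 2 + noiseOp n ρ (fun y => toReal f y ^ 2) x
          - 2 * (toReal f x * noiseOp n ρ (toReal f) x) := by
    have hexpand (y : Fin n → Bool) : noiseKernel ρ x y * (toReal f x - toReal f y) ^ 2
        = noiseKernel ρ x y * toReal f x ^ 2 + noiseKernel ρ x y * toReal f y ^ 2
          - 2 * (toReal f x * (noiseKernel ρ x y * toReal f y)) := by ring
    simp only [hexpand, sum_sub_distrib, sum_add_distrib, ← mul_sum, ← sum_mul, sum_noiseKernel,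
      one_mul, noiseOp_eq_sum_noiseKernel]
  calc corrDisagree n ρ f
      = hcExp n fun x => ∑ y, noiseKernel ρ x y * (toReal f x - toReal f y) ^ 2 := by
        simp only [toReal_sub_sq]
        rfl
    _ = hcExp n (fun x => toReal f x ^ 2) + hcExp n (noiseOp n ρ fun y => toReal f y ^ 2)
          - 2 * stab n ρ f := by
        simp only [hpointwise, stab, hcExp, sum_sub_distrib, sum_add_distrib, ← mul_sum]
        ring
    _ = 2 * (hcExp n (fun x => toReal f x ^ 2) - stab n ρ f) := by
        rw [hcExp_noiseOp]
        ring

lemma continuous_stab : Continuous fun r => stab n r f :=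
  (continuous_finsetSum _ fun x _ =>
    continuous_const.mul (continuous_noiseOp (toReal f) x)).div_const _

lemma hasDerivAt_stab (hρ : ρ ∈ Set.Ioo (-1) 1) :
    HasDerivAt (fun r => stab n r f) (hcExp n (fun x =>
      ∑ i, (toReal f x - toReal f (hcFlip x i)) * noiseDeriv ρ (toReal f) i x) / 2) ρ := by
  rw [← hcExp_mul_sum_of_hcFlip_eq_neg (noiseDeriv_hcFlip hρ (toReal f))]
  exact hasDerivAt_hcExp fun x => (hasDerivAt_noiseOp hρ (toReal f) x).const_mul _

lemma sum_sub_hcFlip_mul_noiseDeriv_le_sens (hρ : ρ ∈ Set.Ioo (-1) 1) (x : Fin n → Bool) :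
    ∑ i, (toReal f x - toReal f (hcFlip x i)) * noiseDeriv ρ (toReal f) i x ≤ sens f x := by
  have hbound := abs_sum_mul_noiseDeriv_le hρ (abs_toReal_le_one f)
    (fun i => toReal f x - toReal f (hcFlip x i)) x
  simp only [abs_toReal_sub, sum_ite_hcFlip_eq_sens, mul_one] at hbound
  exact (le_abs_self _).trans hbound

lemma sum_sub_hcFlip_mul_noiseDeriv_sq_le_sens_div (hρ : ρ ∈ Set.Ico 0 1) (x : Fin n → Bool) :
    (∑ i, (toReal f x - toReal f (hcFlip x i)) * noiseDeriv ρ (toReal f) i x) ^ 2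
      ≤ sens f x / (1 - ρ) := by
  obtain ⟨hρ0, hρ1⟩ := hρ
  have hρ' : ρ ∈ Set.Ioo (-1) 1 := ⟨by linarith, hρ1⟩
  have hpos : 0 < 1 - ρ := sub_pos.mpr hρ1
  have hle : 1 - ρ ≤ 1 - ρ ^ 2 := by nlinarith
  have hT : noiseOp n ρ (fun y => toReal f y ^ 2) x ≤ 1 :=
    noiseOp_le_of_le (Set.Ioo_subset_Icc_self hρ')
      (fun y => (sq_le_one_iff_abs_le_one _).mpr (abs_toReal_le_one f y)) x
  have hbound := sum_mul_noiseDeriv_sq_le hρ' (toReal f)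
    (fun i => toReal f x - toReal f (hcFlip x i)) x
  simp only [toReal_sub_sq, sum_ite_hcFlip_eq_sens] at hbound
  calc (∑ i, (toReal f x - toReal f (hcFlip x i)) * noiseDeriv ρ (toReal f) i x) ^ 2
      ≤ sens f x / (1 - ρ ^ 2) * noiseOp n ρ (fun y => toReal f y ^ 2) x := hbound
    _ ≤ sens f x / (1 - ρ ^ 2) :=
        mul_le_of_le_one_right (div_nonneg (Nat.cast_nonneg _) (hpos.le.trans hle)) hT
    _ ≤ sens f x / (1 - ρ) := by gcongr

lemma hcExp_sum_sub_hcFlip_mul_noiseDeriv_le (hρ : ρ ∈ Set.Ico 0 1) (hp : 1 / 2 ≤ p)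
    (hp1 : p ≤ 1) :
    hcExp n (fun x => ∑ i, (toReal f x - toReal f (hcFlip x i)) * noiseDeriv ρ (toReal f) i x)
      ≤ hcExp n (fun x => (sens f x : ℝ) ^ p) * (1 - ρ) ^ (p - 1) := by
  rw [← hcExp_mul_const]
  exact hcExp_mono fun x => le_rpow_mul_rpow_sub_one (Nat.cast_nonneg _) (sub_pos.mpr hρ.2)
    (sum_sub_hcFlip_mul_noiseDeriv_le_sens f ⟨by linarith [hρ.1], hρ.2⟩ x)
    (sum_sub_hcFlip_mul_noiseDeriv_sq_le_sens_div f hρ x) hp hp1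

lemma hcExp_sq_sub_stab_le {ε : ℝ} (hε : ε ∈ Set.Icc 0 1) (hp : 1 / 2 ≤ p) (hp1 : p ≤ 1) :
    hcExp n (fun x => toReal f x ^ 2) - stab n (1 - ε) f
      ≤ hcExp n (fun x => (sens f x : ℝ) ^ p) / (2 * p) * ε ^ p := by
  have hIco {r : ℝ} (hr : r ∈ Set.Ioo (1 - ε) 1) : r ∈ Set.Ico 0 1 :=
    ⟨by linarith [hr.1, hε.2], hr.2⟩
  have hIoo {r : ℝ} (hr : r ∈ Set.Ioo (1 - ε) 1) : r ∈ Set.Ioo (-1) 1 :=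
    ⟨by linarith [(hIco hr).1], hr.2⟩
  have hintegrated := sub_le_of_deriv_le_rpow (by linarith [hε.1] : 1 - ε ≤ 1)
    (by linarith : 0 < p) (continuous_stab f).continuousOn
    (fun r hr => hasDerivAt_stab f (hIoo hr))
    (M := hcExp n (fun x => (sens f x : ℝ) ^ p) / 2)
    fun r hr => by linarith [hcExp_sum_sub_hcFlip_mul_noiseDeriv_le f (hIco hr) hp hp1]
  rwa [stab_one, sub_sub_cancel, div_div] at hintegrated

end BooleanFunctions

theorem noise_stability_from_sensitivity_moment :
    ∃ C : ℝ, 0 < C ∧ ∀ (δ : ℝ), 0 ≤ δ → δ ≤ 1 / 2 →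
      ∀ (ε : ℝ), 0 < ε → ε ≤ 1 → ∀ (A : ℝ), 0 < A →
        ∀ (n : ℕ) (f : (Fin n → Bool) → Bool),
          hcExp n (fun x => (sens f x : ℝ) ^ ((1 : ℝ) / 2 + δ)) ≤ A →
          stab n (1 - ε) f ≥ hcExp n (fun x => toReal f x ^ 2) - C * A * ε ^ ((1 : ℝ) / 2 + δ)
          ∧ corrDisagree n (1 - ε) f ≤ C * A * ε ^ ((1 : ℝ) / 2 + δ) := by
  refine ⟨2, two_pos, fun δ hδ hδ' ε hε hε' A hA n f hf => ?_⟩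
  have hdefect : hcExp n (fun x => toReal f x ^ 2) - stab n (1 - ε) f
      ≤ A * ε ^ ((1 : ℝ) / 2 + δ) :=
    (hcExp_sq_sub_stab_le (p := 1 / 2 + δ) f ⟨hε.le, hε'⟩ (by linarith) (by linarith)).trans <| by
      gcongr
      exact div_le_of_le_mul₀ (by linarith) hA.le (by nlinarith)
  have hpos : 0 ≤ A * ε ^ ((1 : ℝ) / 2 + δ) := by positivity
  constructor
  · linarith
  · linarith [corrDisagree_eq_two_mul_sub_stab f (1 - ε)]

end
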